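/- Assume (X, T, Ω, P, θ) is a random countable topological Markov chain with the b.i.p. property and conditions (H) and (S) hold, and let λ, {h_ω}, {μ_ω} be as in the random Ruelle theorem (ℒ_ω(h_ω) = λ_ω h_{θω}, ℒ*_ω(μ_{θω}) = λ_ω μ_ω, ∫ h_ω dμ_ω = 1 a.s.). Then the probability measure on X := {(ω,x) : x ∈ X_ω} given by h_ω dμ_ω dP(ω) is invariant and ergodic for the skew product T(ω,x) := (θω, T_ω x). -/

import Mathlib

open MeasureTheory Real Filter

namespace RTMC

/-- The ambient sequence space `ℕ^ℕ`. -/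
abbrev Seq := ℕ → ℕ

/-- The shift map. -/
def shift (x : Seq) : Seq := fun i => x (i + 1)

/-- Prepend one symbol to a sequence. -/
def cons (a : ℕ) (x : Seq) : Seq := fun i =>
  match i with
  | 0 => a
  | j + 1 => x j

/-- `x` and `y` agree in their first `k` coordinates. -/
def agrees (x y : Seq) (k : ℕ) : Prop := ∀ i < k, x i = y i

open scoped Classical in
/-- The shift metric `d_r(x,y) = r^{min{i : x_i ≠ y_i}}`. -/
noncomputable def dr (r : ℝ) (x y : Seq) : ℝ :=
  if x = y then 0 else r ^ sInf {i | x i ≠ y i}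

/-- Prepend the first `len` symbols of `w` to `x` (the inverse branch `τ_w`). -/
def prepend (w : ℕ → ℕ) (len : ℕ) (x : Seq) : Seq := fun i =>
  if i < len then w i else x (i - len)

variable {Ω : Type*}

/-- The fibre `X_ω` of a random topological Markov chain with alphabets `W` and
transition matrices `A` (`A ω i j` means `α^ω_{ij} = 1`). -/
def Xfib (θ : Ω → Ω) (W : Ω → Set ℕ) (A : Ω → ℕ → ℕ → Prop) (ω : Ω) : Set Seq :=
  {x | (∀ i, x i ∈ W (θ^[i] ω)) ∧ ∀ i, A (θ^[i] ω) (x i) (x (i + 1))}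

open scoped Classical in
/-- The Ruelle operator `ℒ_ω(f)(x) = Σ_{T_ω y = x} e^{φ_ω(y)} f(y)`, for `x ∈ X_{θω}`. -/
noncomputable def Lr (θ : Ω → Ω) (W : Ω → Set ℕ) (A : Ω → ℕ → ℕ → Prop) (φ : Ω → Seq → ℝ)
    (ω : Ω) (f : Seq → ℝ) (x : Seq) : ℝ :=
  ∑' a : ℕ, if cons a x ∈ Xfib θ W A ω then Real.exp (φ ω (cons a x)) * f (cons a x) else 0

/-- The iterated Ruelle operator `ℒ^n_ω = ℒ_{θ^{n-1}ω} ∘ ⋯ ∘ ℒ_ω`. -/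
noncomputable def Lrn (θ : Ω → Ω) (W : Ω → Set ℕ) (A : Ω → ℕ → ℕ → Prop) (φ : Ω → Seq → ℝ)
    (ω : Ω) : ℕ → (Seq → ℝ) → Seq → ℝ
  | 0 => fun f => f
  | n + 1 => fun f => Lr θ W A φ (θ^[n] ω) (Lrn θ W A φ ω n f)

/-- The dual Ruelle operator `ℒ^*_ω` on Borel measures, satisfying
`∫ f d(ℒ^*_ω μ) = ∫ ℒ_ω(f) dμ`. -/
noncomputable def dualLr (θ : Ω → Ω) (W : Ω → Set ℕ) (A : Ω → ℕ → ℕ → Prop) (φ : Ω → Seq → ℝ)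
    (ω : Ω) (μ : Measure Seq) : Measure Seq :=
  Measure.sum fun a : ℕ =>
    (μ.withDensity fun x =>
      ENNReal.ofReal ((Xfib θ W A ω).indicator (fun y => Real.exp (φ ω y)) (cons a x))).map
      (cons a)

/-- The iterated dual operator `(ℒ^n_ω)^* = ℒ^*_ω ∘ ⋯ ∘ ℒ^*_{θ^{n-1}ω}`. -/
noncomputable def dualLrn (θ : Ω → Ω) (W : Ω → Set ℕ) (A : Ω → ℕ → ℕ → Prop)
    (φ : Ω → Seq → ℝ) : ℕ → Ω → Measure Seq → Measure Seq
  | 0, _, μ => μ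
  | n + 1, ω, μ => dualLr θ W A φ ω (dualLrn θ W A φ n (θ ω) μ)

/-- The Lipschitz constant of `f` on `S` with respect to the distance function `d`. -/
noncomputable def LipC (S : Set Seq) (d : Seq → Seq → ℝ) (f : Seq → ℝ) : ℝ :=
  sInf {K : ℝ | 0 ≤ K ∧ ∀ x ∈ S, ∀ y ∈ S, |f x - f y| ≤ K * d x y}

/-- The sup norm of `f` on `S`. -/
noncomputable def supNormOn (S : Set Seq) (f : Seq → ℝ) : ℝ :=
  sSup {t : ℝ | ∃ x ∈ S, t = |f x|}

/-- The Lipschitz norm `‖f‖_L = D(f) + ‖f‖_∞` on `S` w.r.t. the distance `d`. -/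
noncomputable def LipNorm (S : Set Seq) (d : Seq → Seq → ℝ) (f : Seq → ℝ) : ℝ :=
  LipC S d f + supNormOn S f

/-- The Vasershtein distance of two Borel measures w.r.t. the cost function `d`. -/
noncomputable def Wass (d : Seq → Seq → ℝ) (μ ν : Measure Seq) : ℝ :=
  sInf {t : ℝ | ∃ m : Measure (Seq × Seq),
    m.map Prod.fst = μ ∧ m.map Prod.snd = ν ∧ t = ∫ p, d p.1 p.2 ∂m}

/-- The Birkhoff sum `S_n φ_ω = Σ_{i=0}^{n-1} φ_{θ^i ω} ∘ T^i_ω`. -/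
noncomputable def birkhoffR (θ : Ω → Ω) (φ : Ω → Seq → ℝ) (ω : Ω) (n : ℕ) (x : Seq) : ℝ :=
  ∑ i ∈ Finset.range n, φ (θ^[i] ω) (shift^[i] x)

/-- `w` is an `ω`-admissible word of length `len`. -/
def AdmR (θ : Ω → Ω) (W : Ω → Set ℕ) (A : Ω → ℕ → ℕ → Prop) (ω : Ω) (w : ℕ → ℕ)
    (len : ℕ) : Prop :=
  (∀ i < len, w i ∈ W (θ^[i] ω)) ∧ ∀ i, i + 1 < len → A (θ^[i] ω) (w i) (w (i + 1))

/-- `B_ω = exp Σ_{k=1}^∞ κ(θ^{−k} ω) r^k`. -/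
noncomputable def Brand (θinv : Ω → Ω) (κ : Ω → ℝ) (r : ℝ) (ω : Ω) : ℝ :=
  Real.exp (∑' k : ℕ, κ (θinv^[k + 1] ω) * r ^ (k + 1))

/-- `α_ω := B_ω/β`. -/
noncomputable def alphaR (θinv : Ω → Ω) (κ : Ω → ℝ) (r β : ℝ) (ω : Ω) : ℝ :=
  Brand θinv κ r ω / β

/-- The metric `d̄_ω(x,y) := min{1, α_ω d_r(x,y)}`. -/
noncomputable def dbarR (θinv : Ω → Ω) (κ : Ω → ℝ) (r β : ℝ) (ω : Ω) (x y : Seq) : ℝ :=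
  min 1 (alphaR θinv κ r β ω * dr r x y)

/-- `t_ω := max{β, 1 − (1 − r^{n_ω} α_ω) C_{θ^{n_ω}ω}/B_{θ^{n_ω}ω}}`. -/
noncomputable def tR (θ θinv : Ω → Ω) (κ : Ω → ℝ) (r β : ℝ) (nseq : Ω → ℕ) (C : Ω → ℝ)
    (ω : Ω) : ℝ :=
  max β (1 - (1 - r ^ nseq ω * alphaR θinv κ r β ω) * C (θ^[nseq ω] ω) /
    Brand θinv κ r (θ^[nseq ω] ω))

/-- `Λ_k(ω) = Π_{i=0}^{k-1} λ_{θ^i ω}`. -/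
noncomputable def LamProd (θ : Ω → Ω) (lam : Ω → ℝ) (ω : Ω) (k : ℕ) : ℝ :=
  ∏ i ∈ Finset.range k, lam (θ^[i] ω)

variable [MeasurableSpace Ω]

/-- The big images and big preimages (b.i.p.) property of a random topological
Markov chain, together with fibrewise topological mixing. -/
structure BIPData (θ θinv : Ω → Ω) (W : Ω → Set ℕ) (A : Ω → ℕ → ℕ → Prop)
    (P : Measure Ω) where
  /-- the big images set `Ω_bi` -/
  Ωbi : Set Ω
  /-- the big preimages set `Ω_bp` -/
  Ωbp : Set Ω
  /-- the finite set `ℐ ⊆ ℕ` -/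
  I : Finset ℕ
  measΩbi : MeasurableSet Ωbi
  measΩbp : MeasurableSet Ωbp
  posΩbi : 0 < P Ωbi
  posΩbp : 0 < P Ωbp
  /-- big images: for `ω ∈ Ω_bi` and `a ∈ 𝒲¹_{θ^{-1}ω}` there is `b ∈ ℐ` with
  `ab ∈ 𝒲²_{θ^{-1}ω}` -/
  bigImages : ∀ᵐ ω ∂P, ω ∈ Ωbi → ∀ a ∈ W (θinv ω),
    ∃ b ∈ I, (b : ℕ) ∈ W ω ∧ A (θinv ω) a b
  /-- big preimages: for `ω ∈ Ω_bp` and `a ∈ 𝒲¹_ω` there is `b ∈ ℐ` with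
  `ba ∈ 𝒲²_{θ^{-1}ω}` -/
  bigPreimages : ∀ᵐ ω ∂P, ω ∈ Ωbp → ∀ a ∈ W ω,
    ∃ b ∈ I, (b : ℕ) ∈ W (θinv ω) ∧ A (θinv ω) b a
  /-- fibrewise topological mixing, with random mixing times `N_{ab}` -/
  mixing : ∀ a b : ℕ, ∃ N : Ω → ℕ, Measurable N ∧ ∀ᵐ ω ∂P, ∀ n, N ω ≤ n →
    a ∈ W ω → b ∈ W (θ^[n] ω) → ∃ x ∈ Xfib θ W A ω, x 0 = a ∧ x n = b

/-- The potential `φ` is fibrewise locally Hölder continuous with index 2,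
parameter `r` and Hölder constants `κ(ω)`: `V^ω_n(φ) ≤ κ(ω) r^n` for `n ≥ 2`. -/
def LocHolder2 (θ : Ω → Ω) (W : Ω → Set ℕ) (A : Ω → ℕ → ℕ → Prop) (P : Measure Ω)
    (φ : Ω → Seq → ℝ) (r : ℝ) (κ : Ω → ℝ) : Prop :=
  ∀ᵐ ω ∂P, ∀ n, 2 ≤ n → ∀ x ∈ Xfib θ W A ω, ∀ y ∈ Xfib θ W A ω, agrees x y n →
    |φ ω x - φ ω y| ≤ κ ω * r ^ n

/-- `V^ω_1(φ) < ∞` for a.e. `ω` with `θω ∈ S`. -/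
def Var1Fin (θ : Ω → Ω) (W : Ω → Set ℕ) (A : Ω → ℕ → ℕ → Prop) (P : Measure Ω)
    (φ : Ω → Seq → ℝ) (S : Set Ω) : Prop :=
  ∀ᵐ ω ∂P, θ ω ∈ S → ∃ M : ℝ, ∀ x ∈ Xfib θ W A ω, ∀ y ∈ Xfib θ W A ω, agrees x y 1 →
    |φ ω x - φ ω y| ≤ M

/-- A random probability measure `{μ_ω}`. -/
def IsRandomProbMeasure (θ : Ω → Ω) (W : Ω → Set ℕ) (A : Ω → ℕ → ℕ → Prop)
    (P : Measure Ω) (μ : Ω → Measure Seq) : Prop :=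
  (∀ B : Set Seq, MeasurableSet B → Measurable fun ω => μ ω B) ∧
    ∀ᵐ ω ∂P, IsProbabilityMeasure (μ ω) ∧ μ ω (Xfib θ W A ω) = 1

/-- `f = {f_ω}` is fibrewise Lipschitz continuous (w.r.t. `d_r`) and bounded. -/
def FibLip (θ : Ω → Ω) (W : Ω → Set ℕ) (A : Ω → ℕ → ℕ → Prop) (P : Measure Ω) (r : ℝ)
    (f : Ω → Seq → ℝ) : Prop :=
  ∀ᵐ ω ∂P, (∃ K, 0 ≤ K ∧ ∀ x ∈ Xfib θ W A ω, ∀ y ∈ Xfib θ W A ω,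
      |f ω x - f ω y| ≤ K * dr r x y) ∧ ∃ M, ∀ x ∈ Xfib θ W A ω, |f ω x| ≤ M

/-- `f = {f_ω}` is fibrewise Hölder continuous with parameter `r`. -/
def FibHolder (θ : Ω → Ω) (W : Ω → Set ℕ) (A : Ω → ℕ → ℕ → Prop) (P : Measure Ω) (r : ℝ)
    (f : Ω → Seq → ℝ) : Prop :=
  ∀ᵐ ω ∂P, ∃ κf M : ℝ, (∀ k, 1 ≤ k → ∀ x ∈ Xfib θ W A ω, ∀ y ∈ Xfib θ W A ω,
      agrees x y k → |f ω x - f ω y| ≤ κf * r ^ k) ∧ ∀ x ∈ Xfib θ W A ω, |f ω x| ≤ M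



lemma density_zero (μ : Measure Seq) [IsFiniteMeasure μ] (s : Set Seq) (hs : MeasurableSet s)
    (d D : ENNReal) (hd : d ≠ 0) (hD : D ≠ ⊤)
    (H : ∀ᵐ x ∂μ, ∃ᶠ n in atTop,
      d * μ (PiNat.cylinder x n) ≤ D * μ (PiNat.cylinder x n ∩ sᶜ)) : μ s = 0 := by
  have key : ∀ ε : ENNReal, ε ≠ 0 → d * μ s ≤ D * ε := by
    intro ε hε
    obtain ⟨U, hsU, hU, -, hUs⟩ := hs.exists_isOpen_sdiff_lt (measure_ne_top μ s) hε
    let Q : Seq → ℕ → Prop := fun x n =>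
      d * μ (PiNat.cylinder x n) ≤ D * μ (PiNat.cylinder x n ∩ sᶜ) ∧ PiNat.cylinder x n ⊆ U
    have hQc : ∀ x y : Seq, ∀ n k, k ≤ n → y ∈ PiNat.cylinder x n → (Q y k ↔ Q x k) := by
      intro x y n k hk hy
      have : PiNat.cylinder y k = PiNat.cylinder x k :=
        PiNat.mem_cylinder_iff_eq.1 (PiNat.cylinder_anti x hk hy)
      simp only [Q, this]
    let E : ℕ → Set Seq := fun n => {x | Q x n ∧ ∀ k < n, ¬ Q x k}
    have hEc : ∀ n x y, y ∈ PiNat.cylinder x n → (y ∈ E n ↔ x ∈ E n) := by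
      intro n x y hy
      simp only [E, Set.mem_ofPred_eq]
      rw [hQc x y n n le_rfl hy]
      refine and_congr Iff.rfl (forall_congr' fun k => forall_congr' fun hk => ?_)
      rw [hQc x y n k hk.le hy]
    let pj : (n : ℕ) → Seq → (Fin n → ℕ) := fun n x i => x i
    have hpj : ∀ n, Measurable (pj n) := fun n => by
      refine measurable_pi_lambda _ fun i => measurable_pi_apply _
    have hpjc : ∀ n x y, pj n y = pj n x ↔ y ∈ PiNat.cylinder x n := by
      intro n x y
      simp only [pj, funext_iff, PiNat.cylinder, Set.mem_ofPred_eq]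
      exact ⟨fun h i hi => h ⟨i, hi⟩, fun h i => h i i.2⟩
    have hEm : ∀ n, MeasurableSet (E n) := by
      intro n
      have : E n = pj n ⁻¹' (pj n '' E n) := by
        refine Set.Subset.antisymm (Set.subset_preimage_image _ _) ?_
        rintro y ⟨x, hx, hxy⟩
        exact (hEc n x y ((hpjc n x y).1 hxy.symm)).2 hx
      rw [this]
      exact hpj n MeasurableSet.of_discrete
    have hE1 : ∀ n, d * μ (E n) ≤ D * μ (E n ∩ sᶜ) := by
      intro n
      have e1 := tsum_measure_preimage_singleton (μ := μ.restrict (E n)) (f := pj n)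
        (s := Set.univ) Set.countable_univ (fun y _ => hpj n MeasurableSet.of_discrete)
      have e2 := tsum_measure_preimage_singleton (μ := μ.restrict (E n ∩ sᶜ)) (f := pj n)
        (s := Set.univ) Set.countable_univ (fun y _ => hpj n MeasurableSet.of_discrete)
      rw [Set.preimage_univ, Measure.restrict_apply_univ] at e1 e2
      rw [← e1, ← e2, ← ENNReal.tsum_mul_left, ← ENNReal.tsum_mul_left]
      refine ENNReal.tsum_le_tsum fun w => ?_
      rw [Measure.restrict_apply (hpj n MeasurableSet.of_discrete),
        Measure.restrict_apply (hpj n MeasurableSet.of_discrete)]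
      by_cases hne : (pj n ⁻¹' {(w : Fin n → ℕ)} ∩ E n).Nonempty
      · obtain ⟨x, hxw, hx⟩ := hne
        have hw : pj n ⁻¹' {(w : Fin n → ℕ)} = PiNat.cylinder x n := by
          ext y
          rw [← hpjc, Set.mem_preimage, Set.mem_singleton_iff, show pj n x = w from hxw]
        have hsub : PiNat.cylinder x n ⊆ E n := fun y hy => (hEc n x y hy).2 hx
        rw [hw, Set.inter_eq_left.2 hsub, ← Set.inter_assoc, Set.inter_eq_left.2 hsub]
        exact hx.1.1
      · rw [Set.not_nonempty_iff_eq_empty.1 hne]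
        simp
    have hdisj : Pairwise (Function.onFun Disjoint E) := by
      intro m n hmn
      refine Set.disjoint_left.2 fun x hm hn => ?_
      rcases lt_or_gt_of_ne hmn with h | h
      · exact hn.2 m h hm.1
      · exact hm.2 n h hn.1
    have hcov : ∀ᵐ x ∂μ, x ∈ s → x ∈ ⋃ n, E n := by
      filter_upwards [H] with x hx hxs
      have h1 : ∀ᶠ n in atTop, PiNat.cylinder x n ⊆ U := by
        obtain ⟨V, ⟨y, n, rfl⟩, hxV, hVU⟩ :=
          (PiNat.isTopologicalBasis_cylinders (fun _ : ℕ => ℕ)).exists_subset_of_mem_open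
            (hsU hxs) hU
        filter_upwards [eventually_ge_atTop n] with k hk
        rw [← PiNat.mem_cylinder_iff_eq.1 hxV] at hVU
        exact (PiNat.cylinder_anti x hk).trans hVU
      obtain ⟨n, hn⟩ := (hx.and_eventually h1).exists
      classical
      have hex : ∃ n, Q x n := ⟨n, hn⟩
      exact Set.mem_iUnion.2 ⟨Nat.find hex, Nat.find_spec hex, fun k hk => Nat.find_min hex hk⟩
    calc d * μ s ≤ d * μ (⋃ n, E n) := by
          gcongr 1
          exact measure_mono_ae hcov
      _ = ∑' n, d * μ (E n) := by rw [measure_iUnion hdisj hEm, ENNReal.tsum_mul_left]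
      _ ≤ ∑' n, D * μ (E n ∩ sᶜ) := ENNReal.tsum_le_tsum hE1
      _ = D * μ (⋃ n, (E n ∩ sᶜ)) := by
          rw [measure_iUnion _ (fun n => (hEm n).inter hs.compl), ENNReal.tsum_mul_left]
          exact fun m n hmn => (hdisj hmn).mono Set.inter_subset_left Set.inter_subset_left
      _ ≤ D * ε := by
          gcongr
          refine le_trans (measure_mono ?_) hUs.le
          refine Set.iUnion_subset fun n x hx => ⟨hx.1.1.2 (PiNat.self_mem_cylinder x n), hx.2⟩
  have h0 : d * μ s ≤ 0 := by
    by_cases hD0 : D = 0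
    · simpa [hD0] using key 1 one_ne_zero
    refine le_of_forall_gt fun c hc => ?_
    by_cases hct : c = ⊤
    · rw [hct]
      refine (key 1 one_ne_zero).trans_lt ?_
      simpa using hD.lt_top
    obtain ⟨c', hc'0, hc'⟩ := exists_between hc
    refine (key (c' / D) (ENNReal.div_pos hc'0.ne' hD).ne').trans_lt ?_
    rw [ENNReal.mul_div_cancel hD0 hD]
    exact hc'
  have := nonpos_iff_eq_zero.1 h0
  exact (mul_eq_zero.1 this).resolve_left hd

lemma ergodic_frequently {Ω : Type*} [MeasurableSpace Ω] {P : Measure Ω} [IsProbabilityMeasure P]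
    {θ : Ω → Ω} (hθ : Ergodic θ P) {E : Set Ω} (hE : MeasurableSet E) (hpos : P E ≠ 0) :
    ∀ᵐ ω ∂P, ∃ᶠ n in atTop, θ^[n] ω ∈ E := by
  have hc := hθ.toMeasurePreserving.conservative
  have h1 := hc.ae_mem_imp_frequently_image_mem hE.nullMeasurableSet
  have hm : MeasurableSet {ω | ∃ᶠ n in atTop, θ^[n] ω ∈ E} := by
    have : {ω | ∃ᶠ n in atTop, θ^[n] ω ∈ E} = ⋂ N : ℕ, ⋃ n : ℕ, ⋃ _ : N ≤ n, θ^[n] ⁻¹' E := by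
      ext ω
      simp [frequently_atTop]
    rw [this]
    exact MeasurableSet.iInter fun N => MeasurableSet.iUnion fun n => MeasurableSet.iUnion fun _ =>
      (hθ.measurable.iterate n) hE
  have hi : θ ⁻¹' {ω | ∃ᶠ n in atTop, θ^[n] ω ∈ E} = {ω | ∃ᶠ n in atTop, θ^[n] ω ∈ E} := by
    ext ω
    simp only [Set.mem_preimage, Set.mem_ofPred_eq, ← Function.iterate_succ_apply]
    have := @frequently_map ℕ ℕ (atTop) (fun n => n + 1) (fun n => θ^[n] ω ∈ E)
    rw [map_add_atTop_eq_nat] at this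
    exact this.symm
  rcases hθ.toPreErgodic.ae_mem_or_ae_notMem hm hi with h | h
  · exact h
  · exfalso
    apply hpos
    rw [measure_eq_zero_iff_ae_notMem]
    filter_upwards [h1, h] with ω a b c
    exact b (a c)

lemma measurableSet_coord (n a : ℕ) : MeasurableSet {y : Seq | y n = a} := by
  have : Measurable fun y : Seq => y n := measurable_pi_apply n
  exact measurableSet_eq_fun this measurable_const

lemma measurable_shift : Measurable shift :=
  measurable_pi_lambda _ fun i => measurable_pi_apply (i + 1)

lemma measurable_cons (a : ℕ) : Measurable (cons a) := by
  refine measurable_pi_lambda _ fun i => ?_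
  cases i with
  | zero => exact measurable_const
  | succ j => exact measurable_pi_apply j

lemma measurable_prepend (w : Seq) (n : ℕ) : Measurable (prepend w n) := by
  refine measurable_pi_lambda _ fun i => ?_
  by_cases h : i < n
  · simp only [prepend, h, if_true]; exact measurable_const
  · simp only [prepend, h, if_false]; exact measurable_pi_apply _

lemma shift_iter_apply (n : ℕ) (x : Seq) (i : ℕ) : shift^[n] x i = x (i + n) := by
  induction n generalizing x with
  | zero => rfl
  | succ n ih => rw [Function.iterate_succ_apply, ih]; simp only [shift]; congr 1

lemma shift_iter_prepend (x y : Seq) (n : ℕ) : shift^[n] (prepend x n y) = y := by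
  funext i
  rw [shift_iter_apply]
  simp [prepend]

lemma prepend_cons (x y : Seq) (n : ℕ) : prepend x n (cons (x n) y) = prepend x (n + 1) y := by
  funext i
  rcases lt_trichotomy i n with h | h | h
  · simp [prepend, h, Nat.lt_succ_of_lt h]
  · subst h; simp [prepend, cons]
  · have h1 : ¬ i < n := by omega
    have h2 : ¬ i < n + 1 := by omega
    obtain ⟨k, rfl⟩ : ∃ k, i = n + 1 + k := ⟨i - (n + 1), by omega⟩
    have h3 : n + 1 + k - n = k + 1 := by omega
    have h4 : n + 1 + k - (n + 1) = k := by omega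
    simp only [prepend, h1, h2, if_false, h3, h4, cons]

lemma prepend_zero (x y : Seq) : prepend x 0 y = y := by
  funext i; simp [prepend]

lemma prepend_shift (x : Seq) (n : ℕ) : prepend x n (shift^[n] x) = x := by
  funext i
  simp only [prepend, shift_iter_apply]
  split_ifs with h
  · rfl
  · congr 1; omega

lemma cons_shift (y : Seq) : cons (y 0) (shift y) = y := by
  funext i; cases i <;> rfl

section
variable {Ω : Type*} (θ : Ω → Ω) (W : Ω → Set ℕ) (A : Ω → ℕ → ℕ → Prop) (φ : Ω → Seq → ℝ)
  (lam : Ω → ℝ)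

lemma measurableSet_Xfib (ω : Ω) : MeasurableSet (Xfib θ W A ω) := by
  have : Xfib θ W A ω = (⋂ i, (fun x : Seq => x i) ⁻¹' (W (θ^[i] ω))) ∩
      ⋂ i, (fun x : Seq => (x i, x (i + 1))) ⁻¹' {p | A (θ^[i] ω) p.1 p.2} := by
    ext x; simp [Xfib]
  rw [this]
  refine (MeasurableSet.iInter fun i => measurable_pi_apply i MeasurableSet.of_discrete).inter
    (MeasurableSet.iInter fun i => ?_)
  exact ((measurable_pi_apply i).prodMk (measurable_pi_apply (i + 1))) MeasurableSet.of_discrete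

lemma shift_mem_Xfib {ω : Ω} {x : Seq} (hx : x ∈ Xfib θ W A ω) (n : ℕ) :
    shift^[n] x ∈ Xfib θ W A (θ^[n] ω) := by
  refine ⟨fun i => ?_, fun i => ?_⟩
  · rw [shift_iter_apply, ← Function.iterate_add_apply]; exact hx.1 _
  · rw [shift_iter_apply, shift_iter_apply, ← Function.iterate_add_apply]
    have := hx.2 (i + n)
    rwa [show i + n + 1 = i + 1 + n by omega] at this

lemma prepend_mem_Xfib {ω : Ω} {x y : Seq} {n : ℕ} (hx : x ∈ Xfib θ W A ω)
    (hy : y ∈ Xfib θ W A (θ^[n] ω)) (h0 : y 0 = x n) : prepend x n y ∈ Xfib θ W A ω := by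
  have key : ∀ i, n ≤ i → ∃ k, i = k + n := fun i hi => ⟨i - n, by omega⟩
  refine ⟨fun i => ?_, fun i => ?_⟩
  · by_cases h : i < n
    · simp only [prepend, h, if_true]; exact hx.1 i
    · obtain ⟨k, rfl⟩ := key i (by omega)
      simp only [prepend, h, if_false, Nat.add_sub_cancel, Function.iterate_add_apply]
      exact hy.1 k
  · rcases lt_trichotomy (i + 1) n with h | h | h
    · have h' : i < n := by omega
      simp only [prepend, h, h', if_true]; exact hx.2 i
    · have h' : i < n := by omega
      have h2 : ¬ (i + 1 < n) := by omega
      have h3 : i + 1 - n = 0 := by omega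
      simp only [prepend, h', h2, if_true, if_false, h3, h0]
      rw [← h]; exact hx.2 i
    · obtain ⟨k, rfl⟩ := key i (by omega)
      have h1 : ¬ (k + n < n) := by omega
      have h2 : ¬ (k + n + 1 < n) := by omega
      have h3 : k + n + 1 - n = k + 1 := by omega
      simp only [prepend, h1, h2, if_false, h3, Nat.add_sub_cancel, Function.iterate_add_apply]
      exact hy.2 k

lemma measurable_ind {ω : Ω} {r : ℝ} (hr : 0 < r ∧ r < 1) {k : ℝ}
    (H : ∀ n, 2 ≤ n → ∀ x ∈ Xfib θ W A ω, ∀ y ∈ Xfib θ W A ω, agrees x y n →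
      |φ ω x - φ ω y| ≤ k * r ^ n) :
    Measurable ((Xfib θ W A ω).indicator (fun y => Real.exp (φ ω y))) := by
  classical
  have hc : ContinuousOn (φ ω) (Xfib θ W A ω) := by
    intro x hx
    rw [ContinuousWithinAt, Metric.tendsto_nhds]
    intro ε hε
    have h1 : Tendsto (fun n : ℕ => k * r ^ n) atTop (nhds 0) := by
      simpa using (tendsto_pow_atTop_nhds_zero_of_lt_one hr.1.le hr.2).const_mul k
    obtain ⟨n, hn, hn2⟩ := ((h1.eventually (gt_mem_nhds hε)).and (eventually_ge_atTop 2)).exists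
    have hU : PiNat.cylinder x n ∈ nhds x :=
      (PiNat.isOpen_cylinder (fun _ : ℕ => ℕ) x n).mem_nhds (PiNat.self_mem_cylinder x n)
    filter_upwards [mem_nhdsWithin_of_mem_nhds hU, self_mem_nhdsWithin] with y hy hyX
    rw [Real.dist_eq]
    exact (H n hn2 y hyX x hx hy).trans_lt hn
  rw [← Set.piecewise_eq_indicator]
  exact ContinuousOn.measurable_piecewise (Real.continuous_exp.comp_continuousOn hc)
    continuousOn_const (measurableSet_Xfib θ W A ω)

/-- normalized Jacobian -/
noncomputable def JJ (ω : Ω) (z : Seq) : ENNReal :=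
  (ENNReal.ofReal (lam ω))⁻¹ *
    ENNReal.ofReal ((Xfib θ W A ω).indicator (fun y => Real.exp (φ ω y)) z)

noncomputable def JJn (n : ℕ) (ω : Ω) (z : Seq) : ENNReal :=
  ∏ i ∈ Finset.range n, JJ θ W A φ lam (θ^[i] ω) (shift^[i] z)

structure GoodAt (m : Ω → Measure Seq) (κ : Ω → ℝ) (r : ℝ) (ω : Ω) : Prop where
  lam_pos : 0 < lam ω
  kappa : 0 ≤ κ ω
  hold : ∀ n, 2 ≤ n → ∀ x ∈ Xfib θ W A ω, ∀ y ∈ Xfib θ W A ω, agrees x y n →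
      |φ ω x - φ ω y| ≤ κ ω * r ^ n
  dual : dualLr θ W A φ ω (m (θ ω)) = ENNReal.ofReal (lam ω) • m ω
  prob : IsProbabilityMeasure (m ω)
  memX : ∀ᵐ x ∂(m ω), x ∈ Xfib θ W A ω

variable {θ W A φ lam} {m : Ω → Measure Seq} {κ : Ω → ℝ} {r : ℝ}

lemma GoodAt.measInd {ω : Ω} (hg : GoodAt θ W A φ lam m κ r ω) (hr : 0 < r ∧ r < 1) :
    Measurable ((Xfib θ W A ω).indicator (fun y => Real.exp (φ ω y))) :=
  measurable_ind θ W A φ hr hg.hold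

lemma GoodAt.measJ {ω : Ω} (hg : GoodAt θ W A φ lam m κ r ω) (hr : 0 < r ∧ r < 1) :
    Measurable (JJ θ W A φ lam ω) :=
  ((hg.measInd hr).ennreal_ofReal).const_mul _

lemma GoodAt.JJ_pos {ω : Ω} {z : Seq} (hz : z ∈ Xfib θ W A ω) :
    JJ θ W A φ lam ω z ≠ 0 := by
  rw [JJ, Set.indicator_of_mem hz]
  refine mul_ne_zero (ENNReal.inv_ne_zero.2 ENNReal.ofReal_ne_top) ?_
  exact (ENNReal.ofReal_pos.2 (Real.exp_pos _)).ne'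

lemma GoodAt.JJ_top {ω : Ω} (hg : GoodAt θ W A φ lam m κ r ω) {z : Seq} :
    JJ θ W A φ lam ω z ≠ ⊤ := by
  rw [JJ]
  refine ENNReal.mul_ne_top (ENNReal.inv_ne_top.2 ?_) ENNReal.ofReal_ne_top
  exact (ENNReal.ofReal_pos.2 hg.lam_pos).ne'

lemma GoodAt.lint {ω : Ω} (hg : GoodAt θ W A φ lam m κ r ω) (hr : 0 < r ∧ r < 1)
    {f : Seq → ENNReal} (hf : Measurable f) :
    ∫⁻ x, f x ∂(m ω) =
      ∑' a : ℕ, ∫⁻ x, JJ θ W A φ lam ω (cons a x) * f (cons a x) ∂(m (θ ω)) := by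
  have h1 : ENNReal.ofReal (lam ω) * ∫⁻ x, f x ∂(m ω) = ∑' a : ℕ, ∫⁻ x, ENNReal.ofReal
      ((Xfib θ W A ω).indicator (fun y => Real.exp (φ ω y)) (cons a x)) * f (cons a x)
        ∂(m (θ ω)) := by
    rw [← smul_eq_mul, ← lintegral_smul_measure, ← hg.dual, dualLr, lintegral_sum_measure]
    refine tsum_congr fun a => ?_
    rw [lintegral_map hf (measurable_cons a), lintegral_withDensity_eq_lintegral_mul]
    · rfl
    · exact ((hg.measInd hr).comp (measurable_cons a)).ennreal_ofReal
    · exact hf.comp (measurable_cons a)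
  have h0 := (ENNReal.ofReal_pos.2 hg.lam_pos).ne'
  have h2 : ∀ t : ENNReal, (ENNReal.ofReal (lam ω))⁻¹ * (ENNReal.ofReal (lam ω) * t) = t := by
    intro t
    rw [← mul_assoc, ENNReal.inv_mul_cancel h0 ENNReal.ofReal_ne_top, one_mul]
  rw [← h2 (∫⁻ x, f x ∂(m ω)), h1, ← ENNReal.tsum_mul_left]
  refine tsum_congr fun a => ?_
  rw [← lintegral_const_mul]
  · simp only [JJ, mul_assoc]
  · exact ((hg.measInd hr).comp (measurable_cons a)).ennreal_ofReal.mul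
      (hf.comp (measurable_cons a))

open scoped Classical in
lemma GoodAt.lint1 {ω : Ω} (hg : GoodAt θ W A φ lam m κ r ω) (hr : 0 < r ∧ r < 1)
    {f : Seq → ENNReal} (hf : Measurable f) (a : ℕ) :
    ∫⁻ x, (if x 0 = a then f x else 0) ∂(m ω) =
      ∫⁻ x, JJ θ W A φ lam ω (cons a x) * f (cons a x) ∂(m (θ ω)) := by
  have hm : Measurable fun x : Seq => if x 0 = a then f x else 0 := by
    refine Measurable.ite ?_ hf measurable_const
    exact measurableSet_coord 0 _
  rw [hg.lint hr hm, tsum_eq_single a]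
  · refine lintegral_congr fun x => ?_
    rw [if_pos (show cons a x 0 = a from rfl)]
  · intro b hb
    simp only [show ∀ x, cons b x 0 = b from fun _ => rfl, hb, if_false, mul_zero,
      lintegral_zero]

lemma measJn (hr : 0 < r ∧ r < 1) {ω : Ω}
    (hg : ∀ i, GoodAt θ W A φ lam m κ r (θ^[i] ω)) (n : ℕ) :
    Measurable (JJn θ W A φ lam n ω) := by
  refine Finset.measurable_fun_prod _ fun i _ => ?_
  exact ((hg i).measJ hr).comp (measurable_shift.iterate i)

open scoped Classical in
lemma lintn (hr : 0 < r ∧ r < 1) {ω : Ω}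
    (hg : ∀ i, GoodAt θ W A φ lam m κ r (θ^[i] ω)) (x : Seq) (n : ℕ)
    {f : Seq → ENNReal} (hf : Measurable f) :
    ∫⁻ y, (if y ∈ PiNat.cylinder x n then f y else 0) ∂(m ω) =
      ∫⁻ y, JJn θ W A φ lam n ω (prepend x n y) * f (prepend x n y) ∂(m (θ^[n] ω)) := by
  induction n generalizing f with
  | zero => simp [prepend_zero, JJn]
  | succ n ih =>
    have e1 : ∀ y : Seq, (if y ∈ PiNat.cylinder x (n + 1) then f y else 0) =
        if y ∈ PiNat.cylinder x n then (if y n = x n then f y else 0) else 0 := by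
      intro y
      have : y ∈ PiNat.cylinder x (n + 1) ↔ y ∈ PiNat.cylinder x n ∧ y n = x n := by
        constructor
        · intro h
          exact ⟨fun i hi => h i (by omega), h n (by omega)⟩
        · rintro ⟨h1, h2⟩ i hi
          rcases Nat.lt_succ_iff_lt_or_eq.1 hi with h | h
          · exact h1 i h
          · subst h; exact h2
      by_cases h1 : y ∈ PiNat.cylinder x n <;> by_cases h2 : y n = x n <;> simp [this, h1, h2]
    have hm : Measurable fun y : Seq => if y n = x n then f y else 0 := by
      refine Measurable.ite ?_ hf measurable_const
      exact measurableSet_coord n _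
    rw [lintegral_congr e1, ih hm]
    have e2 : ∀ y : Seq, JJn θ W A φ lam n ω (prepend x n y) *
        (if prepend x n y n = x n then f (prepend x n y) else 0) =
        if y 0 = x n then JJn θ W A φ lam n ω (prepend x n y) * f (prepend x n y) else 0 := by
      intro y
      have : prepend x n y n = y 0 := by simp [prepend]
      rw [this]; split_ifs <;> simp
    rw [lintegral_congr e2, (hg n).lint1 hr]
    · rw [Function.iterate_succ_apply']
      refine lintegral_congr fun y => ?_
      rw [prepend_cons, ← mul_assoc]
      congr 1
      rw [JJn, JJn, Finset.prod_range_succ, mul_comm]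
      congr 2
      rw [← prepend_cons, shift_iter_prepend]
    · exact ((measJn hr hg n).comp (measurable_prepend x n)).mul
        (hf.comp (measurable_prepend x n))

lemma JJ_le {ω : Ω} {z z' : Seq} (hz : z ∈ Xfib θ W A ω) (hz' : z' ∈ Xfib θ W A ω) {c : ℝ}
    (hc : |φ ω z - φ ω z'| ≤ c) :
    JJ θ W A φ lam ω z ≤ ENNReal.ofReal (Real.exp c) * JJ θ W A φ lam ω z' := by
  rw [JJ, JJ, Set.indicator_of_mem hz, Set.indicator_of_mem hz', mul_left_comm,
    ← ENNReal.ofReal_mul (Real.exp_pos _).le, ← Real.exp_add]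
  gcongr
  have := (abs_le.1 hc).2
  linarith

lemma JJn_le (hr : 0 < r ∧ r < 1) {ω : Ω}
    (hg : ∀ i, GoodAt θ W A φ lam m κ r (θ^[i] ω)) {n : ℕ} {z z' : Seq}
    (hz : z ∈ Xfib θ W A ω) (hz' : z' ∈ Xfib θ W A ω) (hzz : agrees z z' (n + 1)) :
    JJn θ W A φ lam n ω z ≤
      ENNReal.ofReal (Real.exp (∑ i ∈ Finset.range n, κ (θ^[i] ω) * r ^ (n - i))) *
        JJn θ W A φ lam n ω z' := by
  rw [Real.exp_sum, ENNReal.ofReal_prod_of_nonneg (fun i _ => (Real.exp_pos _).le), JJn, JJn,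
    ← Finset.prod_mul_distrib]
  refine Finset.prod_le_prod' fun i hi => ?_
  have hi' := Finset.mem_range.1 hi
  have a1 := shift_mem_Xfib θ W A hz i
  have a2 := shift_mem_Xfib θ W A hz' i
  refine JJ_le a1 a2 (((hg i).hold (n + 1 - i) (by omega) _ a1 _ a2 ?_).trans ?_)
  · intro j hj
    rw [shift_iter_apply, shift_iter_apply]
    exact hzz _ (by omega)
  · exact mul_le_mul_of_nonneg_left
      (pow_le_pow_of_le_one hr.1.le hr.2.le (by omega)) (hg i).kappa

lemma cyl_bounds (hr : 0 < r ∧ r < 1) {ω : Ω}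
    (hg : ∀ i, GoodAt θ W A φ lam m κ r (θ^[i] ω)) {n : ℕ} {x : Seq}
    (hx : x ∈ Xfib θ W A ω) {B : Set Seq} (hB : MeasurableSet B) {C : ℝ}
    (hC : ∑ i ∈ Finset.range n, κ (θ^[i] ω) * r ^ (n - i) ≤ C) :
    JJn θ W A φ lam n ω x * m (θ^[n] ω) ({y | y 0 = x n} ∩ B) ≤ ENNReal.ofReal (Real.exp C) *
      m ω (PiNat.cylinder x (n + 1) ∩ shift^[n] ⁻¹' B) ∧
    m ω (PiNat.cylinder x (n + 1) ∩ shift^[n] ⁻¹' B) ≤ ENNReal.ofReal (Real.exp C) *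
      (JJn θ W A φ lam n ω x * m (θ^[n] ω) ({y | y 0 = x n} ∩ B)) := by
  classical
  have h0 : MeasurableSet {y : Seq | y 0 = x n} :=
    measurableSet_coord 0 _
  have hn : MeasurableSet {y : Seq | y n = x n} :=
    measurableSet_coord n _
  have hSB : MeasurableSet (shift^[n] ⁻¹' B) := (measurable_shift.iterate n) hB
  have hcy : MeasurableSet (PiNat.cylinder x (n + 1)) :=
    (PiNat.isOpen_cylinder (fun _ : ℕ => ℕ) x (n + 1)).measurableSet
  have eq : m ω (PiNat.cylinder x (n + 1) ∩ shift^[n] ⁻¹' B) =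
      ∫⁻ y in {y | y 0 = x n} ∩ B, JJn θ W A φ lam n ω (prepend x n y) ∂(m (θ^[n] ω)) := by
    have := lintn hr hg x n (f := ({y | y n = x n} ∩ shift^[n] ⁻¹' B).indicator 1)
      (measurable_one.indicator (hn.inter hSB))
    rw [← lintegral_indicator (h0.inter hB), ← lintegral_indicator_one (hcy.inter hSB)]
    convert this using 1
    · refine lintegral_congr fun y => ?_
      have : y ∈ PiNat.cylinder x (n + 1) ↔ y ∈ PiNat.cylinder x n ∧ y n = x n := by
        constructor
        · intro h
          exact ⟨fun i hi => h i (by omega), h n (by omega)⟩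
        · rintro ⟨h1, h2⟩ i hi
          rcases Nat.lt_succ_iff_lt_or_eq.1 hi with h | h
          · exact h1 i h
          · subst h; exact h2
      simp only [Set.indicator, Set.mem_inter_iff, this, Set.mem_ofPred_eq]
      split_ifs <;> first | rfl | tauto
    · refine lintegral_congr fun y => ?_
      have : prepend x n y n = y 0 := by simp [prepend]
      simp only [Set.indicator, Set.mem_inter_iff, Set.mem_ofPred_eq, this, Set.mem_preimage,
        shift_iter_prepend]
      split_ifs <;> simp
  have hcyl : ∀ y : Seq, y 0 = x n → agrees (prepend x n y) x (n + 1) := by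
    intro y hy i hi
    rcases Nat.lt_succ_iff_lt_or_eq.1 hi with h | h
    · simp [prepend, h]
    · subst h; simpa [prepend] using hy
  have hae : ∀ᵐ y ∂((m (θ^[n] ω)).restrict ({y | y 0 = x n} ∩ B)),
      y 0 = x n ∧ y ∈ Xfib θ W A (θ^[n] ω) := by
    filter_upwards [ae_restrict_mem (h0.inter hB), ae_restrict_of_ae (hg n).memX] with y h1 h2
    exact ⟨h1.1, h2⟩
  have hexp : ENNReal.ofReal (Real.exp (∑ i ∈ Finset.range n, κ (θ^[i] ω) * r ^ (n - i))) ≤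
      ENNReal.ofReal (Real.exp C) := ENNReal.ofReal_le_ofReal (Real.exp_le_exp.2 hC)
  rw [eq]
  constructor
  · have hmJ : Measurable fun y => JJn θ W A φ lam n ω (prepend x n y) :=
      (measJn hr hg n).comp (measurable_prepend x n)
    rw [← setLIntegral_const, ← lintegral_const_mul _ hmJ]
    refine lintegral_mono_ae ?_
    filter_upwards [hae] with y hy
    refine (JJn_le hr hg hx (prepend_mem_Xfib θ W A hx hy.2 hy.1) ?_).trans (by gcongr)
    exact fun i hi => (hcyl y hy.1 i hi).symm
  · rw [← mul_assoc, ← setLIntegral_const]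
    refine lintegral_mono_ae ?_
    filter_upwards [hae] with y hy
    exact (JJn_le hr hg (prepend_mem_Xfib θ W A hx hy.2 hy.1) hx (hcyl y hy.1)).trans (by gcongr)

end

section
variable {Ω : Type*} {θ : Ω → Ω} {W : Ω → Set ℕ} {A : Ω → ℕ → ℕ → Prop} {φ : Ω → Seq → ℝ}
  {lam : Ω → ℝ} {m : Ω → Measure Seq} {κ : Ω → ℝ} {r : ℝ}

lemma fibre_inv (hr : 0 < r ∧ r < 1) {ω : Ω} (hg : GoodAt θ W A φ lam m κ r ω)
    (hg' : GoodAt θ W A φ lam m κ r (θ ω)) {h : Ω → Seq → ℝ} (hm : Measurable (h ω))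
    (hpos : ∀ x ∈ Xfib θ W A ω, 0 < h ω x) (hpos' : ∀ x ∈ Xfib θ W A (θ ω), 0 < h (θ ω) x)
    (hL : ∀ x ∈ Xfib θ W A (θ ω), Lr θ W A φ ω (h ω) x = lam ω * h (θ ω) x)
    {f : Seq → ENNReal} (hf : Measurable f) :
    ∫⁻ x, f (shift x) * ENNReal.ofReal (h ω x) ∂(m ω) =
      ∫⁻ x, f x * ENNReal.ofReal (h (θ ω) x) ∂(m (θ ω)) := by
  classical
  have hF : Measurable fun x => f (shift x) * ENNReal.ofReal (h ω x) :=
    (hf.comp measurable_shift).mul hm.ennreal_ofReal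
  rw [hg.lint hr hF, ← lintegral_tsum]
  swap
  · intro a
    exact (((hg.measJ hr).comp (measurable_cons a)).mul (hF.comp (measurable_cons a))).aemeasurable
  refine lintegral_congr_ae ?_
  filter_upwards [hg'.memX] with x hx
  have h0 := (ENNReal.ofReal_pos.2 hg.lam_pos).ne'
  set t : ℕ → ℝ := fun a => if cons a x ∈ Xfib θ W A ω then
    Real.exp (φ ω (cons a x)) * h ω (cons a x) else 0 with ht
  have ht0 : ∀ a, 0 ≤ t a := by
    intro a
    simp only [ht]
    split_ifs with h1
    · exact (mul_pos (Real.exp_pos _) (hpos _ h1)).le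
    · exact le_rfl
  have hsum : ∑' a, t a = lam ω * h (θ ω) x := by
    rw [← hL x hx]
    unfold Lr
    refine tsum_congr fun a => ?_
    simp only [ht]
  have hsm : Summable t := by
    by_contra hns
    rw [tsum_eq_zero_of_not_summable hns] at hsum
    exact (mul_pos hg.lam_pos (hpos' x hx)).ne hsum
  have e : ∀ a, JJ θ W A φ lam ω (cons a x) *
      (f (shift (cons a x)) * ENNReal.ofReal (h ω (cons a x))) =
      (f x * (ENNReal.ofReal (lam ω))⁻¹) * ENNReal.ofReal (t a) := by
    intro a
    have : shift (cons a x) = x := rfl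
    rw [this, JJ]
    by_cases h1 : cons a x ∈ Xfib θ W A ω
    · simp only [ht, if_pos h1, Set.indicator_of_mem h1, ENNReal.ofReal_mul (Real.exp_pos _).le]
      ring
    · simp only [ht, if_neg h1, Set.indicator_of_notMem h1]
      simp
  rw [tsum_congr e, ENNReal.tsum_mul_left, ← ENNReal.ofReal_tsum_of_nonneg ht0 hsm, hsum,
    ENNReal.ofReal_mul hg.lam_pos.le, mul_assoc, ← mul_assoc (ENNReal.ofReal (lam ω))⁻¹,
    ENNReal.inv_mul_cancel h0 ENNReal.ofReal_ne_top, one_mul]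

lemma cons_mem {ω : Ω} {a : ℕ} {y : Seq} (ha : a ∈ W ω) (hA : A ω a (y 0))
    (hy : y ∈ Xfib θ W A (θ ω)) : cons a y ∈ Xfib θ W A ω := by
  refine ⟨fun i => ?_, fun i => ?_⟩
  · cases i with
    | zero => exact ha
    | succ j => exact hy.1 j
  · cases i with
    | zero => exact hA
    | succ j => exact hy.2 j

/-- one-step lower bound at big image times -/
lemma step_big (hr : 0 < r ∧ r < 1) {ω : Ω} (hg : GoodAt θ W A φ lam m κ r ω)
    (hg' : GoodAt θ W A φ lam m κ r (θ ω)) {M : ℝ}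
    (hM : ∀ x ∈ Xfib θ W A ω, ∀ y ∈ Xfib θ W A ω, agrees x y 1 → |φ ω x - φ ω y| ≤ M)
    (I : Finset ℕ) (hI : ∀ a ∈ W ω, ∃ b ∈ I, b ∈ W (θ ω) ∧ A ω a b)
    {B : Set Seq} (hB : MeasurableSet B)
    (hpos : ∀ b ∈ W (θ ω), m (θ ω) ({y | y 0 = b} ∩ B) ≠ 0) :
    ∃ N : ℕ, ∀ a, m ω {y | y 0 = a} ≤ N * m ω ({y | y 0 = a} ∩ shift ⁻¹' B) := by
  classical
  have hpr := hg'.prob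
  set δ : ENNReal := I.inf (fun b => if b ∈ W (θ ω) then m (θ ω) ({y | y 0 = b} ∩ B) else 1) ⊓ 1
    with hδ
  have hδ0 : δ ≠ 0 := by
    refine (lt_min ?_ zero_lt_one).ne'
    rw [Finset.lt_inf_iff ENNReal.zero_lt_top]
    intro b _
    split_ifs with hb
    · exact pos_iff_ne_zero.2 (hpos b hb)
    · exact zero_lt_one
  have hδt : δ ≠ ⊤ := (lt_of_le_of_lt inf_le_right ENNReal.one_lt_top).ne
  have hδb : ∀ b ∈ I, b ∈ W (θ ω) → δ ≤ m (θ ω) ({y | y 0 = b} ∩ B) := by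
    intro b hb hbW
    refine inf_le_left.trans ((Finset.inf_le hb).trans ?_)
    rw [if_pos hbW]
  set c := ENNReal.ofReal (Real.exp M) with hc
  obtain ⟨N, hN⟩ := ENNReal.exists_nat_gt (r := c * c / δ)
    (ENNReal.div_ne_top (ENNReal.mul_ne_top ENNReal.ofReal_ne_top ENNReal.ofReal_ne_top) hδ0)
  refine ⟨N, fun a => ?_⟩
  by_cases ha0 : m ω {y | y 0 = a} = 0
  · rw [ha0]; exact zero_le
  obtain ⟨x, hxa, hx⟩ : ∃ x : Seq, x 0 = a ∧ x ∈ Xfib θ W A ω := by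
    by_contra hcon
    push Not at hcon
    apply ha0
    rw [measure_eq_zero_iff_ae_notMem]
    filter_upwards [hg.memX] with y hy hya
    exact hcon y hya hy
  have haW : a ∈ W ω := hxa ▸ hx.1 0
  obtain ⟨b, hbI, hbW, hAb⟩ := hI a haW
  have hmJ : Measurable fun y => JJ θ W A φ lam ω (cons a y) :=
    (hg.measJ hr).comp (measurable_cons a)
  have up : m ω {y | y 0 = a} ≤ c * JJ θ W A φ lam ω x := by
    have e := hg.lint1 hr (f := fun _ => 1) measurable_const a
    have e' : m ω {y | y 0 = a} = ∫⁻ y, (if y 0 = a then 1 else 0) ∂(m ω) := by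
      rw [← lintegral_indicator_one (measurableSet_coord 0 a)]
      refine lintegral_congr fun y => ?_
      simp only [Set.indicator, Set.mem_ofPred_eq, Pi.one_apply]
    rw [e', e]
    calc _ ≤ ∫⁻ _, c * JJ θ W A φ lam ω x ∂(m (θ ω)) := by
          refine lintegral_mono fun y => ?_
          rw [mul_one]
          by_cases hy : cons a y ∈ Xfib θ W A ω
          · refine JJ_le hy hx (hM _ hy _ hx ?_)
            intro i hi
            obtain rfl : i = 0 := by omega
            exact hxa.symm
          · rw [JJ, Set.indicator_of_notMem hy]; simp
      _ = _ := by rw [lintegral_const, measure_univ, mul_one]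
  have low : JJ θ W A φ lam ω x * δ ≤ c * m ω ({y | y 0 = a} ∩ shift ⁻¹' B) := by
    have e := hg.lint1 hr (f := (shift ⁻¹' B).indicator 1)
      (measurable_one.indicator (measurable_shift hB)) a
    have e' : m ω ({y | y 0 = a} ∩ shift ⁻¹' B) =
        ∫⁻ y, (if y 0 = a then (shift ⁻¹' B).indicator 1 y else 0) ∂(m ω) := by
      rw [← lintegral_indicator_one ((measurableSet_coord 0 a).inter (measurable_shift hB))]
      refine lintegral_congr fun y => ?_
      simp only [Set.indicator, Set.mem_inter_iff, Set.mem_ofPred_eq]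
      split_ifs <;> first | rfl | tauto
    have hSet : MeasurableSet ({y : Seq | y 0 = b} ∩ B) := (measurableSet_coord 0 b).inter hB
    rw [e', e]
    calc JJ θ W A φ lam ω x * δ
        ≤ JJ θ W A φ lam ω x * m (θ ω) ({y | y 0 = b} ∩ B) := by
          gcongr; exact hδb b hbI hbW
      _ = ∫⁻ _ in {y | y 0 = b} ∩ B, JJ θ W A φ lam ω x ∂(m (θ ω)) := by rw [setLIntegral_const]
      _ ≤ ∫⁻ y in {y | y 0 = b} ∩ B, c * (JJ θ W A φ lam ω (cons a y) *
            (shift ⁻¹' B).indicator 1 (cons a y)) ∂(m (θ ω)) := by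
          refine lintegral_mono_ae ?_
          filter_upwards [ae_restrict_mem hSet, ae_restrict_of_ae hg'.memX] with y hy hyX
          have hcy : cons a y ∈ Xfib θ W A ω :=
            cons_mem haW (by rw [show y 0 = b from hy.1]; exact hAb) hyX
          have h2 : cons a y ∈ shift ⁻¹' B := hy.2
          rw [Set.indicator_of_mem h2, Pi.one_apply, mul_one]
          refine JJ_le hx hcy (hM _ hx _ hcy ?_)
          intro i hi
          obtain rfl : i = 0 := by omega
          exact hxa
      _ ≤ ∫⁻ y, c * (JJ θ W A φ lam ω (cons a y) *
            (shift ⁻¹' B).indicator 1 (cons a y)) ∂(m (θ ω)) := setLIntegral_le_lintegral _ _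
      _ = _ := lintegral_const_mul _ (hmJ.mul
            ((measurable_one.indicator (measurable_shift hB)).comp (measurable_cons a)))
  calc m ω {y | y 0 = a}
      ≤ (c * c / δ) * m ω ({y | y 0 = a} ∩ shift ⁻¹' B) := by
        rw [ENNReal.div_eq_inv_mul, mul_assoc, ← ENNReal.div_eq_inv_mul,
          ENNReal.le_div_iff_mul_le (Or.inl hδ0) (Or.inl hδt)]
        calc m ω {y | y 0 = a} * δ ≤ c * JJ θ W A φ lam ω x * δ := by gcongr
          _ = c * (JJ θ W A φ lam ω x * δ) := mul_assoc _ _ _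
          _ ≤ c * (c * m ω ({y | y 0 = a} ∩ shift ⁻¹' B)) := by gcongr
          _ = _ := by ring
    _ ≤ _ := by gcongr

end

lemma ae_iter {Ω : Type*} [MeasurableSpace Ω] {P : Measure Ω} {θ : Ω → Ω}
    (hθ : MeasurePreserving θ P P) {p : Ω → Prop} (hp : ∀ᵐ ω ∂P, p ω) :
    ∀ᵐ ω ∂P, ∀ i : ℕ, p (θ^[i] ω) :=
  ae_all_iff.2 fun i => (hθ.iterate i).quasiMeasurePreserving.ae hp

lemma kappa_sum {Ω : Type*} [MeasurableSpace Ω] (P : Measure Ω) [IsProbabilityMeasure P]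
    (θinv : Ω → Ω) (hθ : MeasurePreserving θinv P P) {r : ℝ} (hr : 0 < r ∧ r < 1)
    (κ : Ω → ℝ) (hκm : Measurable κ) (hκint : Integrable κ P) :
    ∀ᵐ ω ∂P, ∑' k : ℕ, ENNReal.ofReal (κ (θinv^[k] ω) * r ^ k) < ⊤ := by
  have hm : ∀ k : ℕ, Measurable fun ω => ENNReal.ofReal (κ (θinv^[k] ω) * r ^ k) := fun k =>
    ((hκm.comp (hθ.measurable.iterate k)).mul_const _).ennreal_ofReal
  refine ae_lt_top (Measurable.tsum hm) ?_
  rw [lintegral_tsum fun k => (hm k).aemeasurable]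
  have e : ∀ k : ℕ, ∫⁻ ω, ENNReal.ofReal (κ (θinv^[k] ω) * r ^ k) ∂P =
      (∫⁻ ω, ENNReal.ofReal (κ ω) ∂P) * ENNReal.ofReal r ^ k := by
    intro k
    have h1 : ∀ ω, ENNReal.ofReal (κ (θinv^[k] ω) * r ^ k) =
        ENNReal.ofReal (κ (θinv^[k] ω)) * ENNReal.ofReal r ^ k := by
      intro ω
      rw [ENNReal.ofReal_mul' (pow_nonneg hr.1.le k), ENNReal.ofReal_pow hr.1.le]
    have hmk : Measurable fun ω => ENNReal.ofReal (κ (θinv^[k] ω)) :=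
      (hκm.comp (hθ.measurable.iterate k)).ennreal_ofReal
    rw [lintegral_congr h1, lintegral_mul_const _ hmk,
      (hθ.iterate k).lintegral_comp hκm.ennreal_ofReal]
  rw [tsum_congr e, ENNReal.tsum_mul_left, ENNReal.tsum_geometric]
  refine ENNReal.mul_ne_top ?_ (ENNReal.inv_ne_top.2 ?_)
  · refine (lt_of_le_of_lt (lintegral_mono fun ω => ?_) ((hasFiniteIntegral_iff_norm κ).1 hκint.2)).ne
    exact ENNReal.ofReal_le_ofReal (le_abs_self _)
  · have : ENNReal.ofReal r < 1 := by
      rw [← ENNReal.ofReal_one]; exact (ENNReal.ofReal_lt_ofReal_iff one_pos).2 hr.2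
    exact (tsub_pos_iff_lt.2 this).ne'

lemma kappa_bound {Ω : Type*} {θ θinv : Ω → Ω} (hinv : ∀ ω, θinv (θ ω) = ω)
    {r : ℝ} (hr : 0 < r ∧ r < 1) {κ : Ω → ℝ} {ω : Ω} (hκ : ∀ i, 0 ≤ κ (θ^[i] ω)) {n N : ℕ}
    (h : ∑' k : ℕ, ENNReal.ofReal (κ (θinv^[k] (θ^[n] ω)) * r ^ k) ≤ N) :
    ∑ i ∈ Finset.range n, κ (θ^[i] ω) * r ^ (n - i) ≤ N := by
  have hinvn : ∀ k, ∀ ω', θinv^[k] (θ^[k] ω') = ω' := by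
    intro k
    induction k with
    | zero => intro _; rfl
    | succ k ih =>
      intro ω'
      rw [Function.iterate_succ_apply θinv, Function.iterate_succ_apply' θ, hinv, ih]
  have h1 : ENNReal.ofReal (∑ i ∈ Finset.range n, κ (θ^[i] ω) * r ^ (n - i)) ≤ N := by
    rw [ENNReal.ofReal_sum_of_nonneg fun i _ => mul_nonneg (hκ i) (pow_nonneg hr.1.le _)]
    refine le_trans ?_ h
    set g : ℕ → ENNReal := fun k => ENNReal.ofReal (κ (θinv^[k] (θ^[n] ω)) * r ^ k) with hg
    have e : ∀ i ∈ Finset.range n, ENNReal.ofReal (κ (θ^[i] ω) * r ^ (n - i)) = g (n - i) := by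
      intro i hi
      have hi' := Finset.mem_range.1 hi
      have : θ^[n] ω = θ^[n - i] (θ^[i] ω) := by
        rw [← Function.iterate_add_apply]; congr 1; congr 1; omega
      simp only [hg]
      rw [this, hinvn]
    rw [Finset.sum_congr rfl e]
    have hinj : Set.InjOn (fun i => n - i) (Finset.range n : Set ℕ) := by
      intro i hi j hj hij
      simp only [Finset.coe_range, Set.mem_Iio] at hi hj
      simp only at hij
      omega
    rw [← Finset.sum_image (f := g) hinj]
    exact ENNReal.sum_le_tsum _
  have := (ENNReal.ofReal_le_iff_le_toReal (ENNReal.natCast_ne_top N)).1 h1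
  simpa using this

section
variable {Ω : Type*} [MeasurableSpace Ω]

lemma ergodic_core (P : Measure Ω) [IsProbabilityMeasure P]
    (θ θinv : Ω → Ω) (hθ : Ergodic θ P) (hθinv : Measurable θinv)
    (hinv : ∀ ω, θinv (θ ω) = ω ∧ θ (θinv ω) = ω)
    (W : Ω → Set ℕ) (A : Ω → ℕ → ℕ → Prop)
    (φ : Ω → Seq → ℝ) (r : ℝ) (hr : 0 < r ∧ r < 1)
    (bip : BIPData θ θinv W A P)
    (κ : Ω → ℝ) (hκm : Measurable κ) (hκint : Integrable κ P)
    (hφ1 : Var1Fin θ W A P φ (bip.Ωbi ∪ bip.Ωbp))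
    (lam : Ω → ℝ) (m : ProbabilityTheory.Kernel Ω Seq) [ProbabilityTheory.IsMarkovKernel m]
    (hgood : ∀ᵐ ω ∂P, GoodAt θ W A φ lam m κ r ω)
    (t : Set (Ω × Seq)) (ht : MeasurableSet t)
    (hinvt : (fun p : Ω × Seq => (θ p.1, shift p.2)) ⁻¹' t = t)
    (hpos : ¬ ∀ᵐ ω ∂P, m ω {x | (ω, x) ∈ t} = 0) :
    ∀ᵐ ω ∂P, m ω {x | (ω, x) ∈ t}ᶜ = 0 := by
  have hmp := hθ.toMeasurePreserving
  have hmpi : MeasurePreserving θinv P P := by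
    refine ⟨hθinv, ?_⟩
    conv_lhs => rw [← hmp.map_eq]
    rw [Measure.map_map hθinv hmp.measurable]
    have : θinv ∘ θ = id := funext fun ω => (hinv ω).1
    rw [this, Measure.map_id]
  have hall := ae_iter hmp hgood
  let B : Ω → Set Seq := fun ω => {x | (ω, x) ∈ t}
  have hBm : ∀ ω, MeasurableSet (B ω) := fun ω => measurable_prodMk_left ht
  have hB1 : ∀ ω, shift ⁻¹' (B (θ ω)) = B ω := by
    intro ω
    ext x
    have : (ω, x) ∈ (fun p : Ω × Seq => (θ p.1, shift p.2)) ⁻¹' t ↔ (ω, x) ∈ t := by rw [hinvt]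
    exact this
  have hBn : ∀ n ω, shift^[n] ⁻¹' (B (θ^[n] ω)) = B ω := by
    intro n
    induction n with
    | zero => intro ω; rfl
    | succ n ih =>
      intro ω
      rw [Function.iterate_succ_apply θ, Function.iterate_succ shift, Set.preimage_comp, ih, hB1]
  have hmeas : ∀ b : ℕ, Measurable fun ω => m ω ({y | y 0 = b} ∩ B ω) := by
    intro b
    have : MeasurableSet ((Prod.snd ⁻¹' {y : Seq | y 0 = b}) ∩ t : Set (Ω × Seq)) :=
      (measurable_snd (measurableSet_coord 0 b)).inter ht
    exact ProbabilityTheory.Kernel.measurable_kernel_prodMk_left this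
  -- step 1
  obtain ⟨b, hb⟩ : ∃ b : ℕ, P {ω | m ω ({y | y 0 = b} ∩ B ω) ≠ 0} ≠ 0 := by
    by_contra hcon
    push Not at hcon
    apply hpos
    have : ∀ᵐ ω ∂P, ∀ b : ℕ, m ω ({y | y 0 = b} ∩ B ω) = 0 := by
      refine ae_all_iff.2 fun b => ?_
      exact hcon b
    filter_upwards [this] with ω hω
    have hU : B ω ⊆ ⋃ b : ℕ, ({y | y 0 = b} ∩ B ω) := fun y hy =>
      Set.mem_iUnion.2 ⟨y 0, rfl, hy⟩
    exact measure_mono_null hU (measure_iUnion_null hω)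
  have hEb : MeasurableSet {ω | m ω ({y | y 0 = b} ∩ B ω) ≠ 0} :=
    ((hmeas b) (measurableSet_singleton 0)).compl
  -- step 2
  have hstep2 : ∀ᵐ ω ∂P, ∀ a ∈ W ω, m ω ({y | y 0 = a} ∩ B ω) ≠ 0 := by
    choose Nn hNm hN using bip.mixing
    have hN' : ∀ᵐ ω ∂P, ∀ a, ∀ n, Nn a b ω ≤ n →
      a ∈ W ω → b ∈ W (θ^[n] ω) → ∃ x ∈ Xfib θ W A ω, x 0 = a ∧ x n = b :=
      ae_all_iff.2 fun a => hN a b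
    filter_upwards [hN', hall, ergodic_frequently hθ hEb hb] with ω h1 hg h3 a ha
    obtain ⟨n, hn, hnN⟩ := (h3.and_eventually (eventually_ge_atTop (Nn a b ω))).exists
    have hn' : m (θ^[n] ω) ({y | y 0 = b} ∩ B (θ^[n] ω)) ≠ 0 := hn
    have hbW : b ∈ W (θ^[n] ω) := by
      by_contra hbW
      apply hn'
      rw [measure_eq_zero_iff_ae_notMem]
      filter_upwards [(hg n).memX] with y hy hyb
      apply hbW
      have := hy.1 0
      rw [show y 0 = b from hyb.1] at this
      exact this
    obtain ⟨x, hx, hx0, hxn⟩ := h1 a n hnN ha hbW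
    have hcb := (cyl_bounds (n := n) hr hg hx (hBm (θ^[n] ω)) le_rfl).1
    rw [hxn, hBn] at hcb
    intro h0
    have hz : m ω (PiNat.cylinder x (n + 1) ∩ B ω) = 0 := by
      refine measure_mono_null ?_ h0
      rintro y ⟨hy, hyB⟩
      exact ⟨(hy 0 (by omega)).trans hx0, hyB⟩
    rw [hz, mul_zero] at hcb
    refine mul_ne_zero ?_ hn' (nonpos_iff_eq_zero.1 hcb)
    exact Finset.prod_ne_zero_iff.2 fun i _ => GoodAt.JJ_pos (shift_mem_Xfib θ W A hx i)
  -- step 3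
  have hbi : ∀ᵐ ω ∂P, θ ω ∈ bip.Ωbi → ∀ a ∈ W ω, ∃ b ∈ bip.I, b ∈ W (θ ω) ∧ A ω a b := by
    have := hmp.quasiMeasurePreserving.ae bip.bigImages
    filter_upwards [this] with ω hω h1
    have := hω h1
    rwa [(hinv ω).1] at this
  have hstep3 : ∀ᵐ ω ∂P, θ ω ∈ bip.Ωbi →
      ∃ N : ℕ, ∀ a : ℕ, m ω {y | y 0 = a} ≤ N * m ω ({y | y 0 = a} ∩ B ω) := by
    filter_upwards [hbi, hall, hφ1, hmp.quasiMeasurePreserving.ae hstep2] with ω h1 hg h3 h4 hω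
    obtain ⟨M, hM⟩ := h3 (Or.inl hω)
    have := step_big hr (hg 0) (hg 1) hM bip.I (h1 hω) (hBm (θ ω)) h4
    rwa [hB1] at this
  -- step 4
  have hS := kappa_sum P θinv hmpi hr κ hκm hκint
  have hSm : Measurable fun ω => ∑' k : ℕ, ENNReal.ofReal (κ (θinv^[k] ω) * r ^ k) :=
    Measurable.tsum fun k =>
      ((hκm.comp (hθinv.iterate k)).mul_const _).ennreal_ofReal
  let E : ℕ → Set Ω := fun N =>
    {ω | ∀ a : ℕ, m ω {y | y 0 = a} ≤ N * m ω ({y | y 0 = a} ∩ B ω)} ∩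
      {ω | ∑' k : ℕ, ENNReal.ofReal (κ (θinv^[k] ω) * r ^ k) ≤ N}
  have hEm : ∀ N, MeasurableSet (E N) := by
    intro N
    refine MeasurableSet.inter ?_ (measurableSet_le hSm measurable_const)
    have : {ω | ∀ a : ℕ, m ω {y | y 0 = a} ≤ N * m ω ({y | y 0 = a} ∩ B ω)} =
        ⋂ a : ℕ, {ω | m ω {y | y 0 = a} ≤ N * m ω ({y | y 0 = a} ∩ B ω)} := by
      ext ω; simp
    rw [this]
    exact MeasurableSet.iInter fun a => measurableSet_le
      (m.measurable_coe (measurableSet_coord 0 a)) ((hmeas a).const_mul _)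
  obtain ⟨N, hN⟩ : ∃ N, P (E N) ≠ 0 := by
    by_contra hcon
    push Not at hcon
    have h1 : ∀ᵐ ω ∂P, ∀ N, ω ∉ E N :=
      ae_all_iff.2 fun N => measure_eq_zero_iff_ae_notMem.1 (hcon N)
    have h2 : P (θ ⁻¹' bip.Ωbi) = 0 := by
      rw [measure_eq_zero_iff_ae_notMem]
      filter_upwards [h1, hS, hstep3] with ω h1 h2 h3 h4
      obtain ⟨N1, hN1⟩ := h3 h4
      obtain ⟨N2, hN2⟩ := ENNReal.exists_nat_gt h2.ne
      refine h1 (max N1 N2) ⟨fun a => (hN1 a).trans ?_, hN2.le.trans ?_⟩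
      · gcongr; exact le_max_left _ _
      · exact_mod_cast le_max_right N1 N2
    rw [hmp.measure_preimage bip.measΩbi.nullMeasurableSet] at h2
    exact bip.posΩbi.ne' h2
  -- step 5
  filter_upwards [hall, ergodic_frequently hθ (hEm N) hN] with ω hg hfr
  set c := ENNReal.ofReal (Real.exp N) with hc
  refine density_zero (m ω) (B ω)ᶜ (hBm ω).compl 1 (c * (c * N)) one_ne_zero
    (ENNReal.mul_ne_top ENNReal.ofReal_ne_top
      (ENNReal.mul_ne_top ENNReal.ofReal_ne_top (ENNReal.natCast_ne_top N))) ?_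
  filter_upwards [(hg 0).memX] with x hx
  refine (tendsto_add_atTop_nat 1).frequently (hfr.mono fun n hn => ?_)
  have hC := kappa_bound (fun ω => (hinv ω).1) hr (fun i => (hg i).kappa) hn.2
  have hx' : x ∈ Xfib θ W A ω := hx
  have l1 := (cyl_bounds (n := n) hr hg hx' (hBm (θ^[n] ω)) hC).1
  have l2 := (cyl_bounds (n := n) hr hg hx' MeasurableSet.univ hC).2
  rw [hBn] at l1
  rw [Set.preimage_univ, Set.inter_univ, Set.inter_univ] at l2
  rw [compl_compl, one_mul]
  calc m ω (PiNat.cylinder x (n + 1))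
      ≤ c * (JJn θ W A φ lam n ω x * m (θ^[n] ω) {y | y 0 = x n}) := l2
    _ ≤ c * (JJn θ W A φ lam n ω x * (N * m (θ^[n] ω) ({y | y 0 = x n} ∩ B (θ^[n] ω)))) := by
        gcongr; exact hn.1 (x n)
    _ = c * (N * (JJn θ W A φ lam n ω x * m (θ^[n] ω) ({y | y 0 = x n} ∩ B (θ^[n] ω)))) := by ring
    _ ≤ c * (N * (c * m ω (PiNat.cylinder x (n + 1) ∩ B ω))) := by gcongr
    _ = _ := by ring

end

/-- (The measure `h_ω dμ_ω dP` is invariant and ergodic.) Given the data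
`λ, {h_ω}, {μ_ω}` of the random Ruelle theorem, the probability measure on
`X = {(ω,x) : x ∈ X_ω} ⊆ Ω × ℕ^ℕ` whose fibre over `ω` is `h_ω dμ_ω` is invariant and
ergodic for the skew product `T(ω,x) = (θω, T_ω x)`. -/
theorem random_equilibrium_invariant_ergodic
    {Ω : Type*} [MeasurableSpace Ω] (P : Measure Ω) [IsProbabilityMeasure P]
    (θ θinv : Ω → Ω) (hθ : Ergodic θ P) (hθinv : Measurable θinv)
    (hinv : ∀ ω, θinv (θ ω) = ω ∧ θ (θinv ω) = ω)
    (W : Ω → Set ℕ) (A : Ω → ℕ → ℕ → Prop)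
    (hrow : ∀ ω, ∀ i ∈ W ω, ∃ j ∈ W (θ ω), A ω i j)
    (hcol : ∀ ω, ∀ i ∈ W (θ ω), ∃ j ∈ W ω, A ω j i)
    (φ : Ω → Seq → ℝ) (r : ℝ) (hr : 0 < r ∧ r < 1)
    (bip : BIPData θ θinv W A P)
    -- condition (H)
    (κ : Ω → ℝ) (hκm : Measurable κ) (hκ0 : ∀ᵐ ω ∂P, 0 ≤ κ ω)
    (hκint : Integrable κ P)
    (hφH : LocHolder2 θ W A P φ r κ)
    (hφ1 : Var1Fin θ W A P φ (bip.Ωbi ∪ bip.Ωbp))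
    -- condition (S)
    (hS : ∃ g : Ω → ℝ, Integrable g P ∧ ∀ᵐ ω ∂P, ∀ x ∈ Xfib θ W A ω,
      |Real.log (Lr θ W A φ (θinv ω) (fun _ => 1) x)| ≤ g ω)
    -- the data of the random Ruelle theorem
    (lam : Ω → ℝ) (hlam : ∀ᵐ ω ∂P, 0 < lam ω)
    (h : Ω → Seq → ℝ) (hhm : Measurable (Function.uncurry h))
    (μ : Ω → Measure Seq) (hμ : IsRandomProbMeasure θ W A P μ)
    (hRuelle : ∀ᵐ ω ∂P,
      (∀ x ∈ Xfib θ W A ω, 0 < h ω x) ∧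
      (∀ x ∈ Xfib θ W A (θ ω), Lr θ W A φ ω (h ω) x = lam ω * h (θ ω) x) ∧
      dualLr θ W A φ ω (μ (θ ω)) = ENNReal.ofReal (lam ω) • μ ω ∧
      (∫ x, h ω x ∂(μ ω)) = 1) :
    ∃ ρ : Measure (Ω × Seq), IsProbabilityMeasure ρ ∧
      (∀ s : Set (Ω × Seq), MeasurableSet s →
        ρ s = ∫⁻ ω, ((μ ω).withDensity fun x => ENNReal.ofReal (h ω x))
          {x | (ω, x) ∈ s} ∂P) ∧
      Ergodic (fun p : Ω × Seq => (θ p.1, shift p.2)) ρ := by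
  classical
  obtain ⟨hμm, hμp⟩ := hμ
  have hmp := hθ.toMeasurePreserving
  -- a Markov kernel version of `μ`
  let k0 : ProbabilityTheory.Kernel Ω Seq := ⟨μ, Measure.measurable_of_measurable_coe _ hμm⟩
  let k1 : ProbabilityTheory.Kernel Ω Seq :=
    ProbabilityTheory.Kernel.const Ω (Measure.dirac (fun _ => 0 : Seq))
  let S : Set Ω := {ω | μ ω Set.univ = 1}
  have hS' : MeasurableSet S := hμm _ MeasurableSet.univ (measurableSet_singleton 1)
  let m : ProbabilityTheory.Kernel Ω Seq := ProbabilityTheory.Kernel.piecewise hS' k0 k1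
  have hmS : ∀ ω ∈ S, m ω = μ ω := by
    intro ω hω
    change (ProbabilityTheory.Kernel.piecewise hS' k0 k1) ω = μ ω
    rw [ProbabilityTheory.Kernel.piecewise_apply, if_pos hω]
    rfl
  have hmM : ProbabilityTheory.IsMarkovKernel m := by
    refine ⟨fun ω => ?_⟩
    by_cases hω : ω ∈ S
    · rw [hmS ω hω]; exact ⟨hω⟩
    · change IsProbabilityMeasure ((ProbabilityTheory.Kernel.piecewise hS' k0 k1) ω)
      rw [ProbabilityTheory.Kernel.piecewise_apply, if_neg hω]
      change IsProbabilityMeasure (Measure.dirac (fun _ => 0 : Seq))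
      infer_instance
  have hmμ : ∀ᵐ ω ∂P, m ω = μ ω := by
    filter_upwards [hμp] with ω hω
    exact hmS ω hω.1.measure_univ
  have hmμ' : ∀ᵐ ω ∂P, m (θ ω) = μ (θ ω) := hmp.quasiMeasurePreserving.ae hmμ
  have hgood : ∀ᵐ ω ∂P, GoodAt θ W A φ lam m κ r ω := by
    filter_upwards [hlam, hκ0, hφH, hμp, hRuelle, hmμ, hmμ'] with ω h1 h2 h3 h4 h5 h6 h7
    refine ⟨h1, h2, h3, ?_, inferInstance, ?_⟩
    · rw [h6, h7]; exact h5.2.2.1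
    · rw [h6]
      have := h4.1
      exact (prob_compl_eq_zero_iff (measurableSet_Xfib θ W A ω)).2 h4.2
  have hgood' := hmp.quasiMeasurePreserving.ae hgood
  have hhω : ∀ ω, Measurable (h ω) := fun ω => hhm.comp measurable_prodMk_left
  have hH : Measurable fun p : Ω × Seq => ENNReal.ofReal (h p.1 p.2) := hhm.ennreal_ofReal
  -- the measure
  let ρ : Measure (Ω × Seq) := (Measure.compProd P m).withDensity fun p => ENNReal.ofReal (h p.1 p.2)
  have hρ : ∀ s : Set (Ω × Seq), MeasurableSet s →
      ρ s = ∫⁻ ω, ∫⁻ x, s.indicator 1 (ω, x) * ENNReal.ofReal (h ω x) ∂(m ω) ∂P := by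
    intro s hs
    have e : (s.indicator fun p : Ω × Seq => ENNReal.ofReal (h p.1 p.2)) =
        fun p => s.indicator 1 p * ENNReal.ofReal (h p.1 p.2) := by
      funext p
      by_cases hp : p ∈ s <;> simp [hp]
    change (Measure.compProd P m).withDensity (fun p => ENNReal.ofReal (h p.1 p.2)) s = _
    rw [withDensity_apply _ hs, ← lintegral_indicator hs, e, Measure.lintegral_compProd]
    exact (measurable_one.indicator hs).mul hH
  have hρ2 : ∀ s : Set (Ω × Seq), MeasurableSet s →
      ρ s = ∫⁻ ω, ((m ω).withDensity fun x => ENNReal.ofReal (h ω x)) {x | (ω, x) ∈ s} ∂P := by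
    intro s hs
    rw [hρ s hs]
    refine lintegral_congr fun ω => ?_
    have hsω : MeasurableSet {x | (ω, x) ∈ s} := measurable_prodMk_left hs
    rw [withDensity_apply _ hsω, ← lintegral_indicator hsω]
    refine lintegral_congr fun x => ?_
    by_cases hp : (ω, x) ∈ s <;> simp [hp]
  have hform : ∀ s : Set (Ω × Seq), MeasurableSet s →
      ρ s = ∫⁻ ω, ((μ ω).withDensity fun x => ENNReal.ofReal (h ω x)) {x | (ω, x) ∈ s} ∂P := by
    intro s hs
    rw [hρ2 s hs]
    refine lintegral_congr_ae ?_
    filter_upwards [hmμ] with ω hω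
    rw [hω]
  have hprob : IsProbabilityMeasure ρ := by
    refine ⟨?_⟩
    rw [hρ _ MeasurableSet.univ]
    have : ∀ᵐ ω ∂P, ∫⁻ x, Set.univ.indicator (1 : Ω × Seq → ENNReal) (ω, x) *
        ENNReal.ofReal (h ω x) ∂(m ω) = 1 := by
      filter_upwards [hgood, hRuelle, hmμ] with ω hg hR he
      simp only [Set.indicator_univ, Pi.one_apply, one_mul]
      have hint : ∫ x, h ω x ∂(m ω) = 1 := by rw [he]; exact hR.2.2.2
      have hi : Integrable (h ω) (m ω) := by
        by_contra hcon
        rw [integral_undef hcon] at hint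
        exact zero_ne_one hint
      rw [← ofReal_integral_eq_lintegral_ofReal hi, hint, ENNReal.ofReal_one]
      filter_upwards [hg.memX] with x hx
      exact (hR.1 x hx).le
    rw [lintegral_congr_ae this]
    simp
  have hTm : Measurable fun p : Ω × Seq => (θ p.1, shift p.2) :=
    (hmp.measurable.comp measurable_fst).prodMk (measurable_shift.comp measurable_snd)
  have hinvρ : MeasurePreserving (fun p : Ω × Seq => (θ p.1, shift p.2)) ρ ρ := by
    refine ⟨hTm, ?_⟩
    ext s hs
    rw [Measure.map_apply hTm hs, hρ _ (hTm hs), hρ s hs]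
    have hG : Measurable fun ω => ∫⁻ x, s.indicator 1 (ω, x) * ENNReal.ofReal (h ω x) ∂(m ω) :=
      Measurable.lintegral_kernel_prod_right'
        (f := fun p : Ω × Seq => s.indicator 1 p * ENNReal.ofReal (h p.1 p.2))
        ((measurable_one.indicator hs).mul hH)
    rw [← hmp.lintegral_comp hG]
    refine lintegral_congr_ae ?_
    filter_upwards [hgood, hgood', hRuelle, hmp.quasiMeasurePreserving.ae hRuelle]
      with ω hg hg' hR hR'
    exact fibre_inv hr hg hg' (hhω ω) hR.1 hR'.1 hR.2.1
      (f := fun x => s.indicator 1 (θ ω, x))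
      ((measurable_one.indicator hs).comp measurable_prodMk_left)
  have hzero : ∀ s : Set (Ω × Seq), MeasurableSet s →
      (∀ᵐ ω ∂P, m ω {x | (ω, x) ∈ s} = 0) → ρ s = 0 := by
    intro s hs hz
    rw [hρ2 s hs, lintegral_congr_ae (g := fun _ => 0), lintegral_zero]
    filter_upwards [hz] with ω hω
    exact withDensity_absolutelyContinuous _ _ hω
  refine ⟨ρ, hprob, hform, hinvρ, ⟨fun s hs hinvs => ?_⟩⟩
  rw [Filter.eventuallyConst_set']
  by_cases hz : ∀ᵐ ω ∂P, m ω {x | (ω, x) ∈ s} = 0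
  · left
    exact ae_eq_empty.2 (hzero s hs hz)
  · right
    have hc := ergodic_core P θ θinv hθ hθinv hinv W A φ r hr bip κ hκm hκint hφ1 lam m hgood
      s hs hinvs hz
    exact ae_eq_univ.2 (hzero sᶜ hs.compl hc)

end RTMC
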